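/- arXiv:2507.13098 — 2 statements merged into one kernel-verified Lean document; each statement's English description precedes it below -/
import Mathlib

section
/- Let (u, P) be smooth fields on [0,L] and suppose that the first variation of Ψ vanishes for every smooth variation (δu, δP) compactly supported in the open interval (0,L); that is, (d/ds)|_{s=0} Ψ(u + s δu, P + s δP) = 0 for all such variations. Then (u, P) satisfies the semi-holonomic Euler–Lagrange equations (S1) and (S2) at every point of (0,L). -/
open Filter Set intervalIntegral

/-- The Greek (transversal) indices: the Lean indices `1, 2 : Fin 3` play the role of the
paper indices `2, 3`; the Lean index `0` plays the role of the longitudinal index `1`. -/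
def greek : Finset (Fin 3) := {1, 2}

/-- The semi-holonomic total energy `Ψ(u, P)` of the 1D-in-3D beam model; `nb i α` stands
for the constant `n̄^i_{1α}`. -/
noncomputable def PsiSemiHolo (L a b c d ℓ : ℝ)
    (nb : Fin 3 → Fin 3 → ℝ)
    (f₀ : ℝ → Fin 3 → ℝ) (f₁ : ℝ → Fin 3 → Fin 3 → ℝ)
    (u : ℝ → Fin 3 → ℝ) (P : ℝ → Fin 3 → Fin 3 → ℝ) : ℝ :=
  ∫ t in (0:ℝ)..L,
    (a / 8 * ∑ i : Fin 3, ∑ j : Fin 3, (P t i j + P t j i) ^ 2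
      + b / 2 * ∑ i : Fin 3, ∑ j : Fin 3, (deriv (fun s => P s i j) t) ^ 2
      + d * ℓ ^ 4 / 24 * ∑ i : Fin 3, ∑ α ∈ greek, (deriv (fun s => P s i α) t) ^ 2
      + c / 2 * ∑ i : Fin 3, ∑ j : Fin 3, (iteratedDeriv 2 (fun s => P s i j) t) ^ 2
      + d / 2 * ∑ i : Fin 3, (deriv (fun s => u s i) t - P t i 0) ^ 2
      - d * ℓ ^ 4 / 12 * ∑ i : Fin 3, ∑ α ∈ greek, nb i α * deriv (fun s => P s i α) t
      - ∑ i : Fin 3, f₀ t i * u t i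
      - ∑ i : Fin 3, ∑ j : Fin 3, f₁ t i j * P t i j)

/-!
The energy `Ψ` is a quadratic functional, so `s ↦ Ψ(u + s v, P + s Q)` is a quadratic polynomial and
its first variation is the weak form of the Euler–Lagrange equations: internal minus external
virtual work. A variation with a single nonzero component `φ` turns this weak form into
`∫ ∑ₖ φ⁽ᵏ⁾ Fₖ = 0` with explicit coefficients `Fₖ`. Moving the derivatives onto the `Fₖ` and applying
the fundamental lemma of the calculus of variations yields `∑ₖ (-1)ᵏ Fₖ⁽ᵏ⁾ = 0`, which is (S1) for a
component of `u` and (S2) for a component of `P`.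
-/

section TestFunctions

variable {E : Type*} [NormedAddCommGroup E] [NormedSpace ℝ E] [CompleteSpace E] {x y : ℝ}

theorem integral_deriv_smul_of_tsupport_subset_Ioo {φ : ℝ → ℝ} {F : ℝ → E}
    (hφ : ContDiff ℝ 1 φ) (hF : ContDiff ℝ 1 F) (hsupp : tsupport φ ⊆ Ioo x y) :
    ∫ t in x..y, deriv φ t • F t = -∫ t in x..y, φ t • deriv F t := by
  have hφx : φ x = 0 := image_eq_zero_of_notMem_tsupport fun h => lt_irrefl x (hsupp h).1
  have hφy : φ y = 0 := image_eq_zero_of_notMem_tsupport fun h => lt_irrefl y (hsupp h).2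
  have hparts := integral_smul_deriv_eq_deriv_smul (a := x) (b := y)
    (fun t _ => (hφ.differentiable one_ne_zero t).hasDerivAt)
    (fun t _ => (hF.differentiable one_ne_zero t).hasDerivAt)
    (hφ.continuous_deriv_one.intervalIntegrable x y)
    (hF.continuous_deriv_one.intervalIntegrable x y)
  rw [hparts, hφx, hφy]
  simp

theorem integral_iteratedDeriv_smul_of_tsupport_subset_Ioo {φ : ℝ → ℝ} {F : ℝ → E} {k : ℕ}
    (hφ : ContDiff ℝ k φ) (hF : ContDiff ℝ k F) (hsupp : tsupport φ ⊆ Ioo x y) :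
    ∫ t in x..y, iteratedDeriv k φ t • F t
      = (-1 : ℝ) ^ k • ∫ t in x..y, φ t • iteratedDeriv k F t := by
  induction k generalizing φ with
  | zero => simp
  | succ k ih =>
    have hφ' : ContDiff ℝ k (deriv φ) := hφ.deriv'
    have hFk : ContDiff ℝ 1 (iteratedDeriv k F) := by
      rw [iteratedDeriv_eq_iterate]
      exact ContDiff.iterate_deriv' 1 k (by rwa [add_comm])
    calc ∫ t in x..y, iteratedDeriv (k + 1) φ t • F t
        = (-1 : ℝ) ^ k • ∫ t in x..y, deriv φ t • iteratedDeriv k F t := by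
          rw [iteratedDeriv_succ']
          exact ih hφ' (hF.of_le (by norm_cast; omega)) (tsupport_deriv_subset.trans hsupp)
      _ = (-1 : ℝ) ^ (k + 1) • ∫ t in x..y, φ t • iteratedDeriv (k + 1) F t := by
          rw [integral_deriv_smul_of_tsupport_subset_Ioo (hφ.of_le (by norm_cast; omega)) hFk
            hsupp, iteratedDeriv_succ, pow_succ, mul_neg_one, neg_smul, smul_neg]

theorem eqOn_zero_of_forall_integral_smul_eq_zero {F : ℝ → E} (hF : ContinuousOn F (Ioo x y))
    (h : ∀ φ : ℝ → ℝ, ContDiff ℝ (⊤ : ℕ∞) φ → tsupport φ ⊆ Ioo x y →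
      ∫ t in x..y, φ t • F t = 0) :
    EqOn F 0 (Ioo x y) := by
  have hae : ∀ᵐ t, t ∈ Ioo x y → F t = 0 := by
    refine isOpen_Ioo.ae_eq_zero_of_integral_contDiff_smul_eq_zero
      (hF.locallyIntegrableOn measurableSet_Ioo) fun φ hφ _ hsupp => ?_
    have hsubset : Function.support (fun t => φ t • F t) ⊆ Ioc x y :=
      (Function.support_smul_subset_left φ F).trans
        ((subset_tsupport φ).trans (hsupp.trans Ioo_subset_Ioc_self))
    rw [← integral_eq_integral_of_support_subset hsubset]
    exact h φ hφ hsupp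
  exact MeasureTheory.Measure.eqOn_open_of_ae_eq
    ((MeasureTheory.ae_restrict_iff' measurableSet_Ioo).2 hae) isOpen_Ioo hF continuousOn_const

theorem sum_neg_one_pow_smul_iteratedDeriv_eq_zero {n : ℕ} {F : Fin n → ℝ → E}
    (hF : ∀ k : Fin n, ContDiff ℝ (k : ℕ) (F k))
    (h : ∀ φ : ℝ → ℝ, ContDiff ℝ (⊤ : ℕ∞) φ → tsupport φ ⊆ Ioo x y →
      ∫ t in x..y, ∑ k : Fin n, iteratedDeriv k φ t • F k t = 0) :
    ∀ t ∈ Ioo x y, ∑ k : Fin n, (-1 : ℝ) ^ (k : ℕ) • iteratedDeriv k (F k) t = 0 := by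
  have hcont (k : Fin n) : Continuous (iteratedDeriv k (F k)) := (hF k).continuous_iteratedDeriv' k
  refine eqOn_zero_of_forall_integral_smul_eq_zero
    (continuous_finsetSum _ fun k _ => (hcont k).const_smul _).continuousOn fun φ hφ hsupp => ?_
  have hφk (k : Fin n) : ContDiff ℝ (k : ℕ) φ := hφ.of_le (by exact_mod_cast le_top)
  have hφ_cont : Continuous φ := hφ.continuous
  have hF_cont (k : Fin n) : Continuous (F k) := (hF k).continuous
  calc ∫ t in x..y, φ t • ∑ k : Fin n, (-1 : ℝ) ^ (k : ℕ) • iteratedDeriv k (F k) t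
      = ∑ k : Fin n, (-1 : ℝ) ^ (k : ℕ) • ∫ t in x..y, φ t • iteratedDeriv k (F k) t := by
        simp only [Finset.smul_sum, ← integral_smul]
        rw [integral_finsetSum fun k _ => Continuous.intervalIntegrable (by fun_prop) _ _]
        simp only [smul_comm (φ _)]
    _ = ∑ k : Fin n, ∫ t in x..y, iteratedDeriv k φ t • F k t :=
        Finset.sum_congr rfl fun k _ =>
          (integral_iteratedDeriv_smul_of_tsupport_subset_Ioo (hφk k) (hF k) hsupp).symm
    _ = ∫ t in x..y, ∑ k : Fin n, iteratedDeriv k φ t • F k t :=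
        (integral_finsetSum fun k _ => Continuous.intervalIntegrable (by fun_prop) _ _).symm
    _ = 0 := h φ hφ hsupp

end TestFunctions

theorem hasDerivAt_integral_add_smul_add_sq_smul {E : Type*} [NormedAddCommGroup E]
    [NormedSpace ℝ E] {μ : MeasureTheory.Measure ℝ} {x y : ℝ} {A B C : ℝ → E}
    (hA : IntervalIntegrable A μ x y) (hB : IntervalIntegrable B μ x y)
    (hC : IntervalIntegrable C μ x y) :
    HasDerivAt (fun s : ℝ => ∫ t in x..y, (A t + s • B t + s ^ 2 • C t) ∂μ)
      (∫ t in x..y, B t ∂μ) 0 := by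
  have hexpand (s : ℝ) : ∫ t in x..y, (A t + s • B t + s ^ 2 • C t) ∂μ
      = (∫ t in x..y, A t ∂μ) + s • (∫ t in x..y, B t ∂μ) + s ^ 2 • ∫ t in x..y, C t ∂μ := by
    have hsB : IntervalIntegrable (fun t => s • B t) μ x y := hB.smul s
    have hAsB : IntervalIntegrable (fun t => A t + s • B t) μ x y := hA.add hsB
    have hsC : IntervalIntegrable (fun t => s ^ 2 • C t) μ x y := hC.smul (s ^ 2)
    rw [integral_add hAsB hsC, integral_add hA hsB, integral_smul, integral_smul]
  simp only [hexpand]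
  have hlinear := (hasDerivAt_id (0 : ℝ)).smul_const (∫ t in x..y, B t ∂μ)
  have hsquare := (hasDerivAt_pow 2 (0 : ℝ)).smul_const (∫ t in x..y, C t ∂μ)
  simpa using! (hlinear.const_add (∫ t in x..y, A t ∂μ)).add hsquare

theorem mem_greek_iff {j : Fin 3} : j ∈ greek ↔ j ≠ 0 := by
  simp only [greek, Finset.mem_insert, Finset.mem_singleton]
  omega

theorem sum_sum_mul_single_single {ι κ R : Type*} [NonAssocSemiring R] [DecidableEq ι]
    [DecidableEq κ] [Fintype ι] (s : Finset κ) (g : ι → κ → R) (i : ι) (j : κ) :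
    ∑ k, ∑ l ∈ s, g k l * (Pi.single i (Pi.single j 1) : ι → κ → R) k l
      = if j ∈ s then g i j else 0 := by
  rw [Finset.sum_eq_single i (fun k _ hk => by simp [hk]) (by simp)]
  simp [Pi.single_apply]

/-- The symmetric bilinear form whose diagonal is twice the quadratic part of the density of
`PsiSemiHolo`: the internal virtual work per unit length of the state `(u, P)` under the variation
`(v, Q)`. -/
noncomputable def internalWork (a b c d ℓ : ℝ) (u : ℝ → Fin 3 → ℝ) (P : ℝ → Fin 3 → Fin 3 → ℝ)
    (v : ℝ → Fin 3 → ℝ) (Q : ℝ → Fin 3 → Fin 3 → ℝ) (t : ℝ) : ℝ :=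
  a / 4 * ∑ i, ∑ j, (P t i j + P t j i) * (Q t i j + Q t j i)
    + b * ∑ i, ∑ j, deriv (fun s => P s i j) t * deriv (fun s => Q s i j) t
    + d * ℓ ^ 4 / 12 * ∑ i, ∑ α ∈ greek, deriv (fun s => P s i α) t * deriv (fun s => Q s i α) t
    + c * ∑ i, ∑ j, iteratedDeriv 2 (fun s => P s i j) t * iteratedDeriv 2 (fun s => Q s i j) t
    + d * ∑ i, (deriv (fun s => u s i) t - P t i 0) * (deriv (fun s => v s i) t - Q t i 0)

/-- Minus the linear part of the density of `PsiSemiHolo`: the virtual work per unit length of the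
loads `f₀`, `f₁` and of the constants `nb` under the variation `(v, Q)`. -/
noncomputable def externalWork (d ℓ : ℝ) (nb : Fin 3 → Fin 3 → ℝ) (f₀ : ℝ → Fin 3 → ℝ)
    (f₁ : ℝ → Fin 3 → Fin 3 → ℝ) (v : ℝ → Fin 3 → ℝ) (Q : ℝ → Fin 3 → Fin 3 → ℝ) (t : ℝ) : ℝ :=
  d * ℓ ^ 4 / 12 * ∑ i, ∑ α ∈ greek, nb i α * deriv (fun s => Q s i α) t
    + ∑ i, f₀ t i * v t i + ∑ i, ∑ j, f₁ t i j * Q t i j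

/-- The principle of virtual work, i.e. the weak form of the Euler–Lagrange equations of
`PsiSemiHolo`, tested against the smooth variations compactly supported in `(0, L)`. -/
def SatisfiesVirtualWork (L a b c d ℓ : ℝ) (nb : Fin 3 → Fin 3 → ℝ) (f₀ : ℝ → Fin 3 → ℝ)
    (f₁ : ℝ → Fin 3 → Fin 3 → ℝ) (u : ℝ → Fin 3 → ℝ) (P : ℝ → Fin 3 → Fin 3 → ℝ) : Prop :=
  ∀ (v : ℝ → Fin 3 → ℝ) (Q : ℝ → Fin 3 → Fin 3 → ℝ),
    (∀ i, ContDiff ℝ (⊤ : ℕ∞) fun t => v t i) →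
    (∀ i j, ContDiff ℝ (⊤ : ℕ∞) fun t => Q t i j) →
    (∀ i, tsupport (fun t => v t i) ⊆ Ioo 0 L) →
    (∀ i j, tsupport (fun t => Q t i j) ⊆ Ioo 0 L) →
    ∫ t in (0 : ℝ)..L, (internalWork a b c d ℓ u P v Q t - externalWork d ℓ nb f₀ f₁ v Q t) = 0

section Beam

variable {L a b c d ℓ : ℝ} {nb : Fin 3 → Fin 3 → ℝ} {f₀ : ℝ → Fin 3 → ℝ}
  {f₁ : ℝ → Fin 3 → Fin 3 → ℝ} {u v : ℝ → Fin 3 → ℝ} {P Q : ℝ → Fin 3 → Fin 3 → ℝ}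

theorem PsiSemiHolo_eq_integral_internalWork_sub_externalWork :
    PsiSemiHolo L a b c d ℓ nb f₀ f₁ u P
      = ∫ t in (0 : ℝ)..L,
          (1 / 2 * internalWork a b c d ℓ u P u P t - externalWork d ℓ nb f₀ f₁ u P t) := by
  unfold PsiSemiHolo internalWork externalWork
  congr with t
  simp only [← sq]
  ring

theorem internalWork_add_smul_self (hu : ∀ i, Differentiable ℝ fun t => u t i)
    (hP : ∀ i j, ContDiff ℝ 2 fun t => P t i j) (hv : ∀ i, Differentiable ℝ fun t => v t i)
    (hQ : ∀ i j, ContDiff ℝ 2 fun t => Q t i j) (s t : ℝ) :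
    internalWork a b c d ℓ (fun t i => u t i + s * v t i) (fun t i j => P t i j + s * Q t i j)
        (fun t i => u t i + s * v t i) (fun t i j => P t i j + s * Q t i j) t
      = internalWork a b c d ℓ u P u P t + 2 * s * internalWork a b c d ℓ u P v Q t
        + s ^ 2 * internalWork a b c d ℓ v Q v Q t := by
  have hu' (i) : deriv (fun t => u t i + s * v t i) t
      = deriv (fun t => u t i) t + s * deriv (fun t => v t i) t := by
    rw [deriv_fun_add (hu i t) ((hv i t).const_mul s), deriv_const_mul_field]
  have hP' (i j) : deriv (fun t => P t i j + s * Q t i j) t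
      = deriv (fun t => P t i j) t + s * deriv (fun t => Q t i j) t := by
    rw [deriv_fun_add ((hP i j).differentiable two_ne_zero t)
      (((hQ i j).differentiable two_ne_zero t).const_mul s), deriv_const_mul_field]
  have hP'' (i j) : iteratedDeriv 2 (fun t => P t i j + s * Q t i j) t
      = iteratedDeriv 2 (fun t => P t i j) t + s * iteratedDeriv 2 (fun t => Q t i j) t := by
    rw [iteratedDeriv_fun_add (hP i j).contDiffAt (contDiff_const.mul (hQ i j)).contDiffAt,
      iteratedDeriv_const_mul_field]
  have hsum_greek (g : Fin 3 → ℝ) : ∑ α ∈ greek, g α = g 1 + g 2 := by simp [greek]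
  simp only [internalWork, hu', hP', hP'', hsum_greek, Fin.sum_univ_three]
  ring

theorem externalWork_add_smul (hP : ∀ i j, Differentiable ℝ fun t => P t i j)
    (hQ : ∀ i j, Differentiable ℝ fun t => Q t i j) (s t : ℝ) :
    externalWork d ℓ nb f₀ f₁ (fun t i => u t i + s * v t i) (fun t i j => P t i j + s * Q t i j) t
      = externalWork d ℓ nb f₀ f₁ u P t + s * externalWork d ℓ nb f₀ f₁ v Q t := by
  have hP' (i j) : deriv (fun t => P t i j + s * Q t i j) t
      = deriv (fun t => P t i j) t + s * deriv (fun t => Q t i j) t := by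
    rw [deriv_fun_add (hP i j t) ((hQ i j t).const_mul s), deriv_const_mul_field]
  simp only [externalWork, hP', mul_add, Finset.sum_add_distrib, mul_left_comm _ s,
    ← Finset.mul_sum]
  ring

theorem continuous_internalWork (hu : ∀ i, ContDiff ℝ 1 fun t => u t i)
    (hP : ∀ i j, ContDiff ℝ 2 fun t => P t i j) (hv : ∀ i, ContDiff ℝ 1 fun t => v t i)
    (hQ : ∀ i j, ContDiff ℝ 2 fun t => Q t i j) :
    Continuous (internalWork a b c d ℓ u P v Q) := by
  have hP₀ (i j) := (hP i j).continuous
  have hQ₀ (i j) := (hQ i j).continuous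
  have hP₁ (i j) := (hP i j).continuous_deriv one_le_two
  have hQ₁ (i j) := (hQ i j).continuous_deriv one_le_two
  unfold internalWork
  fun_prop

theorem continuous_externalWork (hf₀ : ∀ i, Continuous fun t => f₀ t i)
    (hf₁ : ∀ i j, Continuous fun t => f₁ t i j) (hv : ∀ i, Continuous fun t => v t i)
    (hQ : ∀ i j, ContDiff ℝ 1 fun t => Q t i j) :
    Continuous (externalWork d ℓ nb f₀ f₁ v Q) := by
  have hQ₀ (i j) := (hQ i j).continuous
  unfold externalWork
  fun_prop

theorem hasDerivAt_PsiSemiHolo_add_smul (hf₀ : ∀ i, Continuous fun t => f₀ t i)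
    (hf₁ : ∀ i j, Continuous fun t => f₁ t i j) (hu : ∀ i, ContDiff ℝ 1 fun t => u t i)
    (hP : ∀ i j, ContDiff ℝ 2 fun t => P t i j) (hv : ∀ i, ContDiff ℝ 1 fun t => v t i)
    (hQ : ∀ i j, ContDiff ℝ 2 fun t => Q t i j) :
    HasDerivAt (fun s : ℝ => PsiSemiHolo L a b c d ℓ nb f₀ f₁ (fun t i => u t i + s * v t i)
        (fun t i j => P t i j + s * Q t i j))
      (∫ t in (0 : ℝ)..L, (internalWork a b c d ℓ u P v Q t - externalWork d ℓ nb f₀ f₁ v Q t))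
      0 := by
  have hP_C1 (i j) := (hP i j).of_le one_le_two
  have hQ_C1 (i j) := (hQ i j).of_le one_le_two
  have hexpand (s : ℝ) : PsiSemiHolo L a b c d ℓ nb f₀ f₁ (fun t i => u t i + s * v t i)
        (fun t i j => P t i j + s * Q t i j)
      = ∫ t in (0 : ℝ)..L,
          (1 / 2 * internalWork a b c d ℓ u P u P t - externalWork d ℓ nb f₀ f₁ u P t
            + s • (internalWork a b c d ℓ u P v Q t - externalWork d ℓ nb f₀ f₁ v Q t)
            + s ^ 2 • (1 / 2 * internalWork a b c d ℓ v Q v Q t)) := by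
    rw [PsiSemiHolo_eq_integral_internalWork_sub_externalWork]
    congr with t
    rw [internalWork_add_smul_self (fun i => (hu i).differentiable_one) hP
        (fun i => (hv i).differentiable_one) hQ,
      externalWork_add_smul (fun i j => (hP_C1 i j).differentiable_one)
        (fun i j => (hQ_C1 i j).differentiable_one), smul_eq_mul, smul_eq_mul]
    ring
  simp only [hexpand]
  refine hasDerivAt_integral_add_smul_add_sq_smul
    (Continuous.intervalIntegrable (.sub (.const_mul ?_ _) ?_) 0 L)
    (Continuous.intervalIntegrable (.sub ?_ ?_) 0 L)
    (Continuous.intervalIntegrable (.const_mul ?_ _) 0 L)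
  · exact continuous_internalWork hu hP hu hP
  · exact continuous_externalWork hf₀ hf₁ (fun i => (hu i).continuous) hP_C1
  · exact continuous_internalWork hu hP hv hQ
  · exact continuous_externalWork hf₀ hf₁ (fun i => (hv i).continuous) hQ_C1
  · exact continuous_internalWork hv hQ hv hQ

theorem SatisfiesVirtualWork.of_deriv_PsiSemiHolo_eq_zero (hf₀ : ∀ i, Continuous fun t => f₀ t i)
    (hf₁ : ∀ i j, Continuous fun t => f₁ t i j) (hu : ∀ i, ContDiff ℝ 1 fun t => u t i)
    (hP : ∀ i j, ContDiff ℝ 2 fun t => P t i j)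
    (hvar : ∀ (v : ℝ → Fin 3 → ℝ) (Q : ℝ → Fin 3 → Fin 3 → ℝ),
      (∀ i, ContDiff ℝ (⊤ : ℕ∞) fun t => v t i) →
      (∀ i j, ContDiff ℝ (⊤ : ℕ∞) fun t => Q t i j) →
      (∀ i, tsupport (fun t => v t i) ⊆ Ioo 0 L) →
      (∀ i j, tsupport (fun t => Q t i j) ⊆ Ioo 0 L) →
      deriv (fun s : ℝ => PsiSemiHolo L a b c d ℓ nb f₀ f₁ (fun t i => u t i + s * v t i)
        (fun t i j => P t i j + s * Q t i j)) 0 = 0) :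
    SatisfiesVirtualWork L a b c d ℓ nb f₀ f₁ u P := by
  intro v Q hv hQ hv_supp hQ_supp
  have hv_C1 (i) : ContDiff ℝ 1 fun t => v t i := contDiff_infty.1 (hv i) 1
  have hQ_C2 (i j) : ContDiff ℝ 2 fun t => Q t i j := contDiff_infty.1 (hQ i j) 2
  exact (hasDerivAt_PsiSemiHolo_add_smul hf₀ hf₁ hu hP hv_C1 hQ_C2).deriv.symm.trans
    (hvar v Q hv hQ hv_supp hQ_supp)

theorem internalWork_smul_single_displacement (φ : ℝ → ℝ) (i : Fin 3) (t : ℝ) :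
    internalWork a b c d ℓ u P (fun t => φ t • Pi.single i 1) 0 t
      = d * (deriv (fun s => u s i) t - P t i 0) * deriv φ t := by
  simp only [internalWork, Pi.smul_apply, smul_eq_mul, deriv_mul_const_field]
  simp [Pi.single_apply, mul_assoc]

theorem externalWork_smul_single_displacement (φ : ℝ → ℝ) (i : Fin 3) (t : ℝ) :
    externalWork d ℓ nb f₀ f₁ (fun t => φ t • Pi.single i 1) 0 t = f₀ t i * φ t := by
  simp [externalWork, Pi.single_apply]

theorem internalWork_smul_single_director (φ : ℝ → ℝ) (i j : Fin 3) (t : ℝ) :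
    internalWork a b c d ℓ u P 0 (fun t => φ t • Pi.single i (Pi.single j 1)) t
      = (a / 2 * (P t i j + P t j i)
            - d * (deriv (fun s => u s i) t - P t i 0) * (if j = 0 then 1 else 0)) * φ t
        + (b + d * ℓ ^ 4 / 12 * (if j = 0 then 0 else 1)) * deriv (fun s => P s i j) t * deriv φ t
        + c * iteratedDeriv 2 (fun s => P s i j) t * iteratedDeriv 2 φ t := by
  let e : Fin 3 → Fin 3 → ℝ := Pi.single i (Pi.single j 1)
  have hsymm : ∑ k, ∑ l, (P t k l + P t l k) * (φ t * e k l + φ t * e l k)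
      = 2 * (P t i j + P t j i) * φ t := by
    simp only [mul_add, Finset.sum_add_distrib]
    rw [Finset.sum_comm (f := fun k l => (P t k l + P t l k) * (φ t * e l k))]
    simp only [e, ← mul_assoc, sum_sum_mul_single_single, Finset.mem_univ, if_true]
    ring
  have hshear : ∑ k, (deriv (fun s => u s k) t - P t k 0) * -(φ t * e k 0)
      = -((deriv (fun s => u s i) t - P t i 0) * φ t * if j = 0 then 1 else 0) := by
    simp only [mul_neg, Finset.sum_neg_distrib, ← mul_assoc]
    rw [Finset.sum_eq_single i (fun k _ hk => by simp [e, hk]) (by simp)]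
    simp [e, Pi.single_apply, eq_comm]
  simp only [internalWork, Pi.zero_apply, deriv_const, zero_sub, Pi.smul_apply, smul_eq_mul,
    deriv_mul_const_field, iteratedDeriv_mul_const_field]
  rw [hsymm, hshear]
  simp only [← mul_assoc, sum_sum_mul_single_single, Finset.mem_univ, if_true, mem_greek_iff]
  split_ifs <;> first | contradiction | ring

theorem externalWork_smul_single_director (φ : ℝ → ℝ) (i j : Fin 3) (t : ℝ) :
    externalWork d ℓ nb f₀ f₁ 0 (fun t => φ t • Pi.single i (Pi.single j 1)) t
      = d * ℓ ^ 4 / 12 * (if j = 0 then 0 else 1) * nb i j * deriv φ t + f₁ t i j * φ t := by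
  simp only [externalWork, Pi.zero_apply, mul_zero, Finset.sum_const_zero, Pi.smul_apply,
    smul_eq_mul, deriv_mul_const_field, ← mul_assoc, sum_sum_mul_single_single, mem_greek_iff]
  by_cases hj : j = 0 <;> simp [hj, mul_assoc]

theorem SatisfiesVirtualWork.integral_displacement_eq_zero
    (h : SatisfiesVirtualWork L a b c d ℓ nb f₀ f₁ u P) {φ : ℝ → ℝ}
    (hφ : ContDiff ℝ (⊤ : ℕ∞) φ) (hsupp : tsupport φ ⊆ Ioo 0 L) (i : Fin 3) :
    ∫ t in (0 : ℝ)..L,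
      (φ t * -f₀ t i + deriv φ t * (d * (deriv (fun s => u s i) t - P t i 0))) = 0 := by
  have hwork := h (fun t => φ t • Pi.single i 1) 0
    (fun k => by simpa only [Pi.smul_apply, smul_eq_mul] using hφ.mul contDiff_const)
    (fun _ _ => contDiff_const)
    (fun k => by simpa only [Pi.smul_apply, smul_eq_mul] using
      tsupport_mul_subset_left.trans hsupp)
    (fun _ _ => by simp [tsupport])
  refine (integral_congr fun t _ => ?_).trans hwork
  simp only [internalWork_smul_single_displacement, externalWork_smul_single_displacement]
  ring

theorem SatisfiesVirtualWork.integral_director_eq_zero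
    (h : SatisfiesVirtualWork L a b c d ℓ nb f₀ f₁ u P) {φ : ℝ → ℝ}
    (hφ : ContDiff ℝ (⊤ : ℕ∞) φ) (hsupp : tsupport φ ⊆ Ioo 0 L) (i j : Fin 3) :
    ∫ t in (0 : ℝ)..L,
      (φ t * (a / 2 * (P t i j + P t j i)
            - d * (deriv (fun s => u s i) t - P t i 0) * (if j = 0 then 1 else 0) - f₁ t i j)
        + deriv φ t * ((b + d * ℓ ^ 4 / 12 * (if j = 0 then 0 else 1)) * deriv (fun s => P s i j) t
            - d * ℓ ^ 4 / 12 * (if j = 0 then 0 else 1) * nb i j)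
        + iteratedDeriv 2 φ t * (c * iteratedDeriv 2 (fun s => P s i j) t)) = 0 := by
  have hwork := h 0 (fun t => φ t • Pi.single i (Pi.single j 1)) (fun _ => contDiff_const)
    (fun k l => by simpa only [Pi.smul_apply, smul_eq_mul] using hφ.mul contDiff_const)
    (fun _ => by simp [tsupport])
    (fun k l => by simpa only [Pi.smul_apply, smul_eq_mul] using
      tsupport_mul_subset_left.trans hsupp)
  refine (integral_congr fun t _ => ?_).trans hwork
  simp only [internalWork_smul_single_director, externalWork_smul_single_director]
  ring

theorem SatisfiesVirtualWork.force_balance (h : SatisfiesVirtualWork L a b c d ℓ nb f₀ f₁ u P)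
    (hf₀ : ∀ i, Continuous fun t => f₀ t i) (hu : ∀ i, ContDiff ℝ 2 fun t => u t i)
    (hP : ∀ i j, ContDiff ℝ 1 fun t => P t i j) (i : Fin 3) :
    ∀ t ∈ Ioo 0 L,
      f₀ t i = -d * (iteratedDeriv 2 (fun s => u s i) t - deriv (fun s => P s i 0) t) := by
  intro t ht
  let n : ℝ → ℝ := fun t => d * (deriv (fun s => u s i) t - P t i 0)
  let F : Fin 2 → ℝ → ℝ := ![fun t => -f₀ t i, n]
  have hu' : ContDiff ℝ 1 (deriv fun t => u t i) := ContDiff.deriv' (hu i)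
  have hF : ∀ k : Fin 2, ContDiff ℝ (k : ℕ) (F k) := Fin.forall_fin_two.2
    ⟨contDiff_zero.2 (hf₀ i).neg, contDiff_const.mul (hu'.sub (hP i 0))⟩
  have hweak (φ : ℝ → ℝ) (hφ : ContDiff ℝ (⊤ : ℕ∞) φ) (hsupp : tsupport φ ⊆ Ioo 0 L) :
      ∫ t in (0 : ℝ)..L, ∑ k : Fin 2, iteratedDeriv k φ t • F k t = 0 := by
    simpa [Fin.sum_univ_two, F] using h.integral_displacement_eq_zero hφ hsupp i
  have hn' : deriv n t
      = d * (iteratedDeriv 2 (fun s => u s i) t - deriv (fun s => P s i 0) t) := by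
    rw [deriv_const_mul_field, deriv_fun_sub (hu'.differentiable_one t)
      ((hP i 0).differentiable_one t), iteratedDeriv_succ, iteratedDeriv_one]
  have hEL : -f₀ t i - deriv n t = 0 := by
    simpa [Fin.sum_univ_two, F, sub_eq_add_neg] using
      sum_neg_one_pow_smul_iteratedDeriv_eq_zero hF hweak t ht
  linear_combination -hEL - hn'

theorem SatisfiesVirtualWork.moment_balance (h : SatisfiesVirtualWork L a b c d ℓ nb f₀ f₁ u P)
    (hf₁ : ∀ i j, Continuous fun t => f₁ t i j) (hu : ∀ i, ContDiff ℝ 1 fun t => u t i)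
    (hP : ∀ i j, ContDiff ℝ 4 fun t => P t i j) (i j : Fin 3) :
    ∀ t ∈ Ioo 0 L,
      f₁ t i j = a / 2 * (P t i j + P t j i)
        - b * iteratedDeriv 2 (fun s => P s i j) t
        + c * iteratedDeriv 4 (fun s => P s i j) t
        - d * (deriv (fun s => u s i) t - P t i 0) * (if j = 0 then 1 else 0)
        - d * ℓ ^ 4 / 12 * iteratedDeriv 2 (fun s => P s i j) t
            * (if j = 0 then 0 else 1) := by
  intro t ht
  let p : ℝ → ℝ := fun s => P s i j
  let κ : ℝ := d * ℓ ^ 4 / 12 * (if j = 0 then 0 else 1)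
  let g : ℝ → ℝ := fun t => a / 2 * (P t i j + P t j i)
    - d * (deriv (fun s => u s i) t - P t i 0) * (if j = 0 then 1 else 0) - f₁ t i j
  let m : ℝ → ℝ := fun t => (b + κ) * deriv p t - κ * nb i j
  let q : ℝ → ℝ := fun t => c * iteratedDeriv 2 p t
  let F : Fin 3 → ℝ → ℝ := ![g, m, q]
  have hg : Continuous g := by
    have hP_cont (k l) := (hP k l).continuous
    fun_prop
  have hm : ContDiff ℝ 1 m := by
    have hp' : ContDiff ℝ 3 (deriv p) := ContDiff.deriv' (hP i j)
    exact (contDiff_const.mul (hp'.of_le (by norm_num))).sub contDiff_const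
  have hq : ContDiff ℝ 2 q := by
    refine contDiff_const.mul ?_
    rw [iteratedDeriv_eq_iterate]
    exact ContDiff.iterate_deriv' 2 2 (hP i j)
  have hF : ∀ k : Fin 3, ContDiff ℝ (k : ℕ) (F k) :=
    Fin.forall_fin_succ.2 ⟨contDiff_zero.2 hg, Fin.forall_fin_two.2 ⟨hm, hq⟩⟩
  have hweak (φ : ℝ → ℝ) (hφ : ContDiff ℝ (⊤ : ℕ∞) φ) (hsupp : tsupport φ ⊆ Ioo 0 L) :
      ∫ t in (0 : ℝ)..L, ∑ k : Fin 3, iteratedDeriv k φ t • F k t = 0 := by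
    have hdirector : ∫ t in (0 : ℝ)..L,
        (φ t * g t + deriv φ t * m t + iteratedDeriv 2 φ t * q t) = 0 :=
      h.integral_director_eq_zero hφ hsupp i j
    simpa [Fin.sum_univ_three, F] using hdirector
  have hm' : deriv m t = (b + κ) * iteratedDeriv 2 p t := by
    rw [deriv_sub_const, deriv_const_mul_field, iteratedDeriv_succ, iteratedDeriv_one]
  have hq'' : iteratedDeriv 2 q t = c * iteratedDeriv 4 p t := by
    rw [iteratedDeriv_const_mul_field]
    simp only [iteratedDeriv_eq_iterate, ← Function.iterate_add_apply]
  have hEL : g t - deriv m t + iteratedDeriv 2 q t = 0 := by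
    simpa [Fin.sum_univ_three, F, sub_eq_add_neg] using
      sum_neg_one_pow_smul_iteratedDeriv_eq_zero hF hweak t ht
  rw [hm', hq''] at hEL
  linear_combination -hEL

end Beam

theorem statement6_general
    (L a b c d ℓ : ℝ)
    (nb : Fin 3 → Fin 3 → ℝ)
    (f₀ : ℝ → Fin 3 → ℝ) (f₁ : ℝ → Fin 3 → Fin 3 → ℝ)
    (hf₀ : ∀ i, Continuous (fun t => f₀ t i))
    (hf₁ : ∀ i j, Continuous (fun t => f₁ t i j))
    (u : ℝ → Fin 3 → ℝ) (P : ℝ → Fin 3 → Fin 3 → ℝ)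
    (hu : ∀ i, ContDiff ℝ 2 (fun t => u t i))
    (hP : ∀ i j, ContDiff ℝ 4 (fun t => P t i j))
    (hvar : ∀ (δu : ℝ → Fin 3 → ℝ) (δP : ℝ → Fin 3 → Fin 3 → ℝ),
      (∀ i, ContDiff ℝ (⊤ : ℕ∞) (fun t => δu t i)) →
      (∀ i j, ContDiff ℝ (⊤ : ℕ∞) (fun t => δP t i j)) →
      (∀ i, tsupport (fun t => δu t i) ⊆ Ioo (0 : ℝ) L) →
      (∀ i j, tsupport (fun t => δP t i j) ⊆ Ioo (0 : ℝ) L) →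
      deriv (fun s : ℝ => PsiSemiHolo L a b c d ℓ nb f₀ f₁
        (fun t i => u t i + s * δu t i)
        (fun t i j => P t i j + s * δP t i j)) 0 = 0) :
    ∀ t ∈ Ioo (0 : ℝ) L, ∀ i j : Fin 3,
      (f₀ t i = -d * (iteratedDeriv 2 (fun s => u s i) t - deriv (fun s => P s i 0) t)) ∧
      (f₁ t i j = a / 2 * (P t i j + P t j i)
        - b * iteratedDeriv 2 (fun s => P s i j) t
        + c * iteratedDeriv 4 (fun s => P s i j) t
        - d * (deriv (fun s => u s i) t - P t i 0) * (if j = 0 then 1 else 0)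
        - d * ℓ ^ 4 / 12 * iteratedDeriv 2 (fun s => P s i j) t
            * (if j = 0 then 0 else 1)) := by
  have hwork : SatisfiesVirtualWork L a b c d ℓ nb f₀ f₁ u P :=
    .of_deriv_PsiSemiHolo_eq_zero hf₀ hf₁ (fun i => (hu i).of_le one_le_two)
      (fun i j => (hP i j).of_le (by norm_num)) hvar
  exact fun t ht i j =>
    ⟨hwork.force_balance hf₀ hu (fun i j => (hP i j).of_le (by norm_num)) i t ht,
      hwork.moment_balance hf₁ (fun i => (hu i).of_le one_le_two) hP i j t ht⟩

/-- If `(u, P)` are smooth and the first variation of the semi-holonomic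
energy `Ψ` vanishes for every smooth variation compactly supported in `(0, L)`, then `(u, P)`
satisfies the semi-holonomic Euler–Lagrange equations (S1) and (S2) on `(0, L)`. -/
theorem statement6
    (L a b c d ℓ : ℝ) (hL : 0 < L) (ha : 0 < a) (hb : 0 < b) (hc : 0 < c)
    (hd : 0 < d) (hℓ : 0 < ℓ)
    (nb : Fin 3 → Fin 3 → ℝ)
    (f₀ : ℝ → Fin 3 → ℝ) (f₁ : ℝ → Fin 3 → Fin 3 → ℝ)
    (hf₀ : ∀ i, Continuous (fun t => f₀ t i))
    (hf₁ : ∀ i j, Continuous (fun t => f₁ t i j))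
    (u : ℝ → Fin 3 → ℝ) (P : ℝ → Fin 3 → Fin 3 → ℝ)
    (hu : ∀ i, ContDiff ℝ (⊤ : ℕ∞) (fun t => u t i))
    (hP : ∀ i j, ContDiff ℝ (⊤ : ℕ∞) (fun t => P t i j))
    (hvar : ∀ (δu : ℝ → Fin 3 → ℝ) (δP : ℝ → Fin 3 → Fin 3 → ℝ),
      (∀ i, ContDiff ℝ (⊤ : ℕ∞) (fun t => δu t i)) →
      (∀ i j, ContDiff ℝ (⊤ : ℕ∞) (fun t => δP t i j)) →
      (∀ i, tsupport (fun t => δu t i) ⊆ Ioo (0:ℝ) L) →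
      (∀ i j, tsupport (fun t => δP t i j) ⊆ Ioo (0:ℝ) L) →
      deriv (fun s : ℝ => PsiSemiHolo L a b c d ℓ nb f₀ f₁
        (fun t i => u t i + s * δu t i)
        (fun t i j => P t i j + s * δP t i j)) 0 = 0) :
    ∀ t ∈ Ioo (0:ℝ) L, ∀ i j : Fin 3,
      -- (S1)
      (f₀ t i = -d * (iteratedDeriv 2 (fun s => u s i) t - deriv (fun s => P s i 0) t)) ∧
      -- (S2)
      (f₁ t i j = a / 2 * (P t i j + P t j i)
        - b * iteratedDeriv 2 (fun s => P s i j) t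
        + c * iteratedDeriv 4 (fun s => P s i j) t
        - d * (deriv (fun s => u s i) t - P t i 0) * (if j = 0 then 1 else 0)
        - d * ℓ ^ 4 / 12 * iteratedDeriv 2 (fun s => P s i j) t
            * (if j = 0 then 0 else 1)) := by
  exact statement6_general L a b c d ℓ nb f₀ f₁ hf₀ hf₁ u P (fun i => contDiff_infty.1 (hu i) 2)
    (fun i j => contDiff_infty.1 (hP i j) 4) hvar
end

section
/- Let u : [0,L] → ℝ³ be six times continuously differentiable and suppose that the first variation of Ψ vanishes for every smooth variation δu compactly supported in the open interval (0,L); that is, (d/ds)|_{s=0} Ψ(u + s δu) = 0 for all such variations. Then for every i ∈ {1,2,3} and every X¹ ∈ (0,L): −a (u^i)″ + b (u^i)^{(4)} − c (u^i)^{(6)} = (f̂₀)_i. -/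
/-!
Along a line `u + s δu` the energy is a quadratic polynomial in `s`, whose linear coefficient is the
first variation. Integrating by parts `k` times moves every derivative off a test function `g`
supported in the open interval, at the cost of the sign `(-1) ^ k`, so varying the component `u i`
alone gives `∫ g * (∑ k, (-1) ^ k * κ k * (u i)⁽²ᵏ⁾ - f i) = 0`. As `g` is arbitrary and the second
factor is continuous, that factor vanishes.
-/

open Filter Set intervalIntegral

/-- The holonomic total energy
`Ψ(u) = ∫₀ᴸ [ (a/2)Σ_i((u^i)′)² + (b/2)Σ_i((u^i)″)² + (c/2)Σ_i((u^i)‴)² − (f̂₀)_i u^i ] dX¹`. -/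
noncomputable def PsiHolo (L a b c : ℝ) (f₀ : ℝ → Fin 3 → ℝ) (u : ℝ → Fin 3 → ℝ) : ℝ :=
  ∫ t in (0:ℝ)..L,
    (a / 2 * ∑ i : Fin 3, (deriv (fun s => u s i) t) ^ 2
      + b / 2 * ∑ i : Fin 3, (iteratedDeriv 2 (fun s => u s i) t) ^ 2
      + c / 2 * ∑ i : Fin 3, (iteratedDeriv 3 (fun s => u s i) t) ^ 2
      - ∑ i : Fin 3, f₀ t i * u t i)

open MeasureTheory
open scoped ContDiff Interval

theorem iteratedDeriv_eq_zero_of_notMem_tsupport {𝕜 F : Type*} [NontriviallyNormedField 𝕜]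
    [NormedAddCommGroup F] [NormedSpace 𝕜 F] {g : 𝕜 → F} {x : 𝕜} (hx : x ∉ tsupport g) (k : ℕ) :
    iteratedDeriv k g x = 0 := by
  have h : iteratedFDeriv 𝕜 k g x = 0 :=
    Function.notMem_support.1 fun h => hx (support_iteratedFDeriv_subset k h)
  simp [iteratedDeriv, h]

theorem iteratedDeriv_iteratedDeriv {𝕜 F : Type*} [NontriviallyNormedField 𝕜]
    [NormedAddCommGroup F] [NormedSpace 𝕜 F] (m k : ℕ) (w : 𝕜 → F) :
    iteratedDeriv m (iteratedDeriv k w) = iteratedDeriv (m + k) w := by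
  simp only [iteratedDeriv_eq_iterate, Function.iterate_add_apply]

theorem iteratedDeriv_add_const_mul {𝕜 𝕜' : Type*} [NontriviallyNormedField 𝕜] [NormedField 𝕜']
    [NormedAlgebra 𝕜 𝕜'] {w g : 𝕜 → 𝕜'} {k : ℕ} {x : 𝕜} (hw : ContDiffAt 𝕜 k w x)
    (hg : ContDiffAt 𝕜 k g x) (s : 𝕜') :
    iteratedDeriv k (fun r => w r + s * g r) x = iteratedDeriv k w x + s * iteratedDeriv k g x := by
  rw [iteratedDeriv_fun_add hw (contDiffAt_const.mul hg), iteratedDeriv_const_mul_field]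

theorem integral_mul_iteratedDeriv_eq_iteratedDeriv_mul {A : Type*} [NormedRing A]
    [NormedAlgebra ℝ A] [CompleteSpace A] {α β : ℝ} {w g : ℝ → A} {k : ℕ}
    (hw : ContDiff ℝ k w) (hg : ContDiff ℝ k g)
    (hα : ∀ j < k, iteratedDeriv j g α = 0) (hβ : ∀ j < k, iteratedDeriv j g β = 0) :
    ∫ t in α..β, w t * iteratedDeriv k g t = (-1) ^ k * ∫ t in α..β, iteratedDeriv k w t * g t := by
  induction k generalizing w with
  | zero => simp
  | succ k ih =>
    have hw' : ContDiff ℝ k (deriv w) := ((contDiff_succ_iff_deriv (n := k)).1 hw).2.2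
    have hdw : Differentiable ℝ w := hw.differentiable (by simp)
    have hdg : Differentiable ℝ (iteratedDeriv k g) := hg.differentiable_iteratedDeriv' k
    have hcg : Continuous (deriv (iteratedDeriv k g)) := by
      simpa only [iteratedDeriv_succ] using hg.continuous_iteratedDeriv' (k + 1)
    calc ∫ t in α..β, w t * iteratedDeriv (k + 1) g t
        = -∫ t in α..β, deriv w t * iteratedDeriv k g t := by
          simp only [iteratedDeriv_succ]
          rw [integral_mul_deriv_eq_deriv_mul (fun t _ => (hdw t).hasDerivAt)
            (fun t _ => (hdg t).hasDerivAt) (hw'.continuous.intervalIntegrable _ _)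
            (hcg.intervalIntegrable _ _), hα k k.lt_succ_self, hβ k k.lt_succ_self]
          simp only [mul_zero, sub_self, zero_sub]
      _ = -((-1) ^ k * ∫ t in α..β, iteratedDeriv k (deriv w) t * g t) := by
          rw [ih hw' (hg.of_le (by norm_cast; omega))
            (fun j hj => hα j (hj.trans k.lt_succ_self))
            (fun j hj => hβ j (hj.trans k.lt_succ_self))]
      _ = (-1) ^ (k + 1) * ∫ t in α..β, iteratedDeriv (k + 1) w t * g t := by
          rw [iteratedDeriv_succ', pow_succ', neg_one_mul, neg_mul]

theorem eqOn_zero_of_forall_integral_contDiff_smul_eq_zero {E F : Type*}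
    [NormedAddCommGroup E] [NormedSpace ℝ E] [FiniteDimensional ℝ E] [MeasurableSpace E]
    [BorelSpace E] [NormedAddCommGroup F] [NormedSpace ℝ F] [CompleteSpace F] {μ : Measure E}
    [μ.IsOpenPosMeasure] [IsLocallyFiniteMeasure μ] {U : Set E} (hU : IsOpen U) {h : E → F}
    (hh : ContinuousOn h U)
    (hint : ∀ g : E → ℝ, ContDiff ℝ ∞ g → HasCompactSupport g → tsupport g ⊆ U →
      ∫ x, g x • h x ∂μ = 0) :
    EqOn h 0 U := by
  have hae : ∀ᵐ x ∂μ, x ∈ U → h x = 0 :=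
    hU.ae_eq_zero_of_integral_contDiff_smul_eq_zero
      (hh.locallyIntegrableOn hU.measurableSet) hint
  exact Measure.eqOn_open_of_ae_eq ((ae_restrict_iff' hU.measurableSet).2 hae) hU hh
    continuousOn_const

theorem eqOn_zero_of_forall_intervalIntegral_contDiff_smul_eq_zero {F : Type*}
    [NormedAddCommGroup F] [NormedSpace ℝ F] [CompleteSpace F] {α β : ℝ} {h : ℝ → F}
    (hh : ContinuousOn h (Ioo α β))
    (hint : ∀ g : ℝ → ℝ, ContDiff ℝ ∞ g → tsupport g ⊆ Ioo α β →
      ∫ t in α..β, g t • h t = 0) :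
    EqOn h 0 (Ioo α β) := by
  refine eqOn_zero_of_forall_integral_contDiff_smul_eq_zero (μ := volume) isOpen_Ioo hh
    fun g hg _ hgs => ?_
  have hsupp : Function.support (fun t => g t • h t) ⊆ Ioc α β :=
    (Function.support_smul_subset_left g h).trans
      ((subset_tsupport g).trans (hgs.trans Ioo_subset_Ioc_self))
  rw [← integral_eq_integral_of_support_subset hsupp, hint g hg hgs]

section QuadraticEnergy

variable {ι : Type*} [Fintype ι] {n : ℕ}

/-- The energy `∫ ∑ i, (∑ k ≤ n, (κ k / 2) ((u i)⁽ᵏ⁾)² - f i * u i)` over `[α, β]` of a curve with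
components `u i`, for constant stiffnesses `κ k` and a dead load `f`. The holonomic energy is the
case `κ = (0, a, b, c)`. -/
noncomputable def quadraticEnergy (α β : ℝ) (κ : Fin (n + 1) → ℝ) (f u : ι → ℝ → ℝ) : ℝ :=
  ∫ t in α..β, ∑ i, (∑ k, κ k / 2 * iteratedDeriv k (u i) t ^ 2 - f i t * u i t)

/-- The first variation of `quadraticEnergy` at `u` in the direction `v`, in weak form, that is,
before any integration by parts. -/
noncomputable def firstVariation (α β : ℝ) (κ : Fin (n + 1) → ℝ) (f u v : ι → ℝ → ℝ) : ℝ :=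
  ∫ t in α..β, ∑ i, (∑ k, κ k * (iteratedDeriv k (u i) t * iteratedDeriv k (v i) t) - f i t * v i t)

/-- The formally self-adjoint operator `∑ k ≤ n, (-1)ᵏ κ k (d/dt)²ᵏ`, acting on one component: the
left-hand side of the Euler-Lagrange equation of `quadraticEnergy`. -/
noncomputable def eulerLagrangeOperator (κ : Fin (n + 1) → ℝ) (w : ℝ → ℝ) (t : ℝ) : ℝ :=
  ∑ k : Fin (n + 1), (-1) ^ (k : ℕ) * κ k * iteratedDeriv (2 * k) w t

variable {α β : ℝ} {κ : Fin (n + 1) → ℝ} {f u v : ι → ℝ → ℝ}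

theorem quadraticEnergy_add_mul (hf : ∀ i, ContinuousOn (f i) [[α, β]])
    (hu : ∀ i, ContDiff ℝ n (u i)) (hv : ∀ i, ContDiff ℝ n (v i)) (s : ℝ) :
    quadraticEnergy α β κ f (fun i t => u i t + s * v i t) =
      quadraticEnergy α β κ f u + s * firstVariation α β κ f u v
        + s ^ 2 * quadraticEnergy α β κ 0 v := by
  have hk (k : Fin (n + 1)) : ((k : ℕ) : ℕ∞ω) ≤ n := by norm_cast; omega
  have hcu i (k : Fin (n + 1)) := (hu i).continuous_iteratedDeriv k (hk k)
  have hcv i (k : Fin (n + 1)) := (hv i).continuous_iteratedDeriv k (hk k)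
  have hcu₀ i := (hu i).continuous
  have hcv₀ i := (hv i).continuous
  have hzero i : ContinuousOn ((0 : ι → ℝ → ℝ) i) [[α, β]] := continuousOn_const
  have hlin i (k : Fin (n + 1)) t :=
    iteratedDeriv_add_const_mul (x := t) ((hu i).of_le (hk k)).contDiffAt
      ((hv i).of_le (hk k)).contDiffAt s
  have expand_square (t : ℝ) (i : ι) :
      ∑ k, κ k / 2 * (iteratedDeriv k (u i) t + s * iteratedDeriv k (v i) t) ^ 2 =
        ∑ k, κ k / 2 * iteratedDeriv k (u i) t ^ 2
          + s * ∑ k, κ k * (iteratedDeriv k (u i) t * iteratedDeriv k (v i) t)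
          + s ^ 2 * ∑ k, κ k / 2 * iteratedDeriv k (v i) t ^ 2 := by
    simp only [Finset.mul_sum, ← Finset.sum_add_distrib]
    exact Finset.sum_congr rfl fun k _ => by ring
  unfold quadraticEnergy firstVariation
  rw [← intervalIntegral.integral_const_mul, ← intervalIntegral.integral_const_mul,
    ← intervalIntegral.integral_add, ← intervalIntegral.integral_add]
  · refine integral_congr fun t _ => ?_
    simp only [hlin, expand_square, Finset.mul_sum (ι := ι), ← Finset.sum_add_distrib]
    exact Finset.sum_congr rfl fun i _ => by simp only [Pi.zero_apply]; ring
  all_goals exact ContinuousOn.intervalIntegrable (by fun_prop)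

theorem deriv_quadraticEnergy_add_mul (hf : ∀ i, ContinuousOn (f i) [[α, β]])
    (hu : ∀ i, ContDiff ℝ n (u i)) (hv : ∀ i, ContDiff ℝ n (v i)) :
    deriv (fun s : ℝ => quadraticEnergy α β κ f (fun i t => u i t + s * v i t)) 0 =
      firstVariation α β κ f u v := by
  simp only [quadraticEnergy_add_mul hf hu hv]
  have h := (((hasDerivAt_id (0 : ℝ)).mul_const (firstVariation α β κ f u v)).const_add
    (quadraticEnergy α β κ f u)).fun_add
      (((hasDerivAt_id (0 : ℝ)).fun_pow 2).mul_const (quadraticEnergy α β κ 0 v))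
  simpa using h.deriv

theorem continuous_eulerLagrangeOperator {w : ℝ → ℝ} (hw : ContDiff ℝ (2 * n : ℕ) w) :
    Continuous (eulerLagrangeOperator κ w) :=
  continuous_finsetSum _ fun k _ => continuous_const.mul <|
    hw.continuous_iteratedDeriv _ (by norm_cast; omega)

theorem integral_sum_iteratedDeriv_mul_iteratedDeriv {w g : ℝ → ℝ}
    (hw : ContDiff ℝ (2 * n : ℕ) w) (hg : ContDiff ℝ n g)
    (hα : ∀ j < n, iteratedDeriv j g α = 0) (hβ : ∀ j < n, iteratedDeriv j g β = 0) :
    ∫ t in α..β, ∑ k, κ k * (iteratedDeriv k w t * iteratedDeriv k g t) =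
      ∫ t in α..β, eulerLagrangeOperator κ w t * g t := by
  have hwk (k : Fin (n + 1)) : ContDiff ℝ (k : ℕ) (iteratedDeriv k w) := by
    rw [iteratedDeriv_eq_iterate]
    exact (hw.of_le (by norm_cast; omega)).iterate_deriv' k k
  have hgk (k : Fin (n + 1)) : ContDiff ℝ (k : ℕ) g := hg.of_le (by norm_cast; omega)
  have hcw (k : Fin (n + 1)) : Continuous (iteratedDeriv (2 * k) w) :=
    hw.continuous_iteratedDeriv _ (by norm_cast; omega)
  have hcg (k : Fin (n + 1)) := (hgk k).continuous_iteratedDeriv' k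
  have hibp (k : Fin (n + 1)) :
      ∫ t in α..β, κ k * (iteratedDeriv k w t * iteratedDeriv k g t) =
        ∫ t in α..β, (-1) ^ (k : ℕ) * κ k * iteratedDeriv (2 * k) w t * g t := by
    simp only [mul_assoc, intervalIntegral.integral_const_mul]
    rw [integral_mul_iteratedDeriv_eq_iteratedDeriv_mul (hwk k) (hgk k)
      (fun j hj => hα j (hj.trans_le k.is_le)) (fun j hj => hβ j (hj.trans_le k.is_le)),
      iteratedDeriv_iteratedDeriv, ← two_mul, mul_left_comm]
  simp only [eulerLagrangeOperator, Finset.sum_mul]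
  rw [intervalIntegral.integral_finsetSum, intervalIntegral.integral_finsetSum]
  · exact Finset.sum_congr rfl fun k _ => hibp k
  · exact fun k _ => ((((hcw k).const_mul _).mul hg.continuous).intervalIntegrable _ _)
  · exact fun k _ => (((hwk k).continuous.mul (hcg k)).const_mul _).intervalIntegrable _ _

theorem firstVariation_single [DecidableEq ι] (i : ι) (g : ℝ → ℝ) :
    firstVariation α β κ f u (Pi.single i g) =
      ∫ t in α..β, (∑ k, κ k * (iteratedDeriv k (u i) t * iteratedDeriv k g t) - f i t * g t) := by
  refine integral_congr fun t _ => ?_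
  refine (Finset.sum_eq_single i (fun j _ hj => ?_) (by simp)).trans (by simp)
  simp [Pi.single_eq_of_ne hj]

theorem firstVariation_single_eq_integral_mul_eulerLagrangeOperator [DecidableEq ι] {i : ι}
    {g : ℝ → ℝ} (hf : ContinuousOn (f i) [[α, β]]) (hu : ContDiff ℝ (2 * n : ℕ) (u i))
    (hg : ContDiff ℝ n g) (hα : ∀ j < n, iteratedDeriv j g α = 0)
    (hβ : ∀ j < n, iteratedDeriv j g β = 0) :
    firstVariation α β κ f u (Pi.single i g) =
      ∫ t in α..β, g t * (eulerLagrangeOperator κ (u i) t - f i t) := by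
  have hcE := continuous_eulerLagrangeOperator (κ := κ) hu
  have hcg := hg.continuous
  have hcu (k : Fin (n + 1)) := hu.continuous_iteratedDeriv k (by norm_cast; omega)
  have hcgk (k : Fin (n + 1)) := hg.continuous_iteratedDeriv k (by norm_cast; omega)
  have hfg : IntervalIntegrable (fun t => f i t * g t) volume α β :=
    ContinuousOn.intervalIntegrable (by fun_prop)
  calc firstVariation α β κ f u (Pi.single i g)
      = (∫ t in α..β, ∑ k, κ k * (iteratedDeriv k (u i) t * iteratedDeriv k g t))
          - ∫ t in α..β, f i t * g t := by
        rw [firstVariation_single, intervalIntegral.integral_sub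
          (Continuous.intervalIntegrable (by fun_prop) _ _) hfg]
    _ = (∫ t in α..β, eulerLagrangeOperator κ (u i) t * g t) - ∫ t in α..β, f i t * g t := by
        rw [integral_sum_iteratedDeriv_mul_iteratedDeriv hu hg hα hβ]
    _ = ∫ t in α..β, g t * (eulerLagrangeOperator κ (u i) t - f i t) := by
        rw [← intervalIntegral.integral_sub
          (Continuous.intervalIntegrable (by fun_prop) _ _) hfg]
        exact integral_congr fun t _ => by ring

theorem PsiHolo_eq_quadraticEnergy (L a b c : ℝ) (f₀ u : ℝ → Fin 3 → ℝ) :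
    PsiHolo L a b c f₀ u =
      quadraticEnergy (n := 3) 0 L ![0, a, b, c] (fun i t => f₀ t i) (fun i t => u t i) := by
  refine integral_congr fun t _ => ?_
  simp only [Fin.sum_univ_three, Fin.sum_univ_four, Matrix.cons_val, Fin.coe_ofNat_eq_mod,
    Nat.reduceAdd, Nat.reduceMod, iteratedDeriv_zero, iteratedDeriv_one]
  ring

theorem eulerLagrangeOperator_holonomic (a b c : ℝ) (w : ℝ → ℝ) (t : ℝ) :
    eulerLagrangeOperator (n := 3) ![0, a, b, c] w t =
      -a * iteratedDeriv 2 w t + b * iteratedDeriv 4 w t - c * iteratedDeriv 6 w t := by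
  simp only [eulerLagrangeOperator, Fin.sum_univ_four, Matrix.cons_val, Fin.coe_ofNat_eq_mod,
    Nat.reduceAdd, Nat.reduceMod, Nat.reduceMul]
  ring

theorem statement7_general (hf : ∀ i, ContinuousOn (f i) [[α, β]])
    (hu : ∀ i, ContDiff ℝ (2 * n : ℕ) (u i))
    (hvar : ∀ v : ι → ℝ → ℝ, (∀ i, ContDiff ℝ ∞ (v i)) → (∀ i, tsupport (v i) ⊆ Ioo α β) →
      deriv (fun s : ℝ => quadraticEnergy α β κ f (fun i t => u i t + s * v i t)) 0 = 0) :
    ∀ t ∈ Ioo α β, ∀ i, eulerLagrangeOperator κ (u i) t = f i t := by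
  classical
  intro t ht i
  have hweak (g : ℝ → ℝ) (hg : ContDiff ℝ ∞ g) (hgs : tsupport g ⊆ Ioo α β) :
      ∫ t in α..β, g t * (eulerLagrangeOperator κ (u i) t - f i t) = 0 := by
    have hv (j) : ContDiff ℝ ∞ ((Pi.single i g : ι → ℝ → ℝ) j) := by
      obtain rfl | hj := eq_or_ne j i
      · rwa [Pi.single_eq_same]
      · rw [Pi.single_eq_of_ne hj]; exact contDiff_const
    have hvs (j) : tsupport ((Pi.single i g : ι → ℝ → ℝ) j) ⊆ Ioo α β := by
      obtain rfl | hj := eq_or_ne j i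
      · rwa [Pi.single_eq_same]
      · simp [Pi.single_eq_of_ne hj, tsupport]
    rw [← firstVariation_single_eq_integral_mul_eulerLagrangeOperator (hf i) (hu i)
        (hg.of_le (by exact_mod_cast le_top))
        (fun j _ => iteratedDeriv_eq_zero_of_notMem_tsupport (fun h => lt_irrefl _ (hgs h).1) j)
        (fun j _ => iteratedDeriv_eq_zero_of_notMem_tsupport (fun h => lt_irrefl _ (hgs h).2) j),
      ← deriv_quadraticEnergy_add_mul hf
        (fun j => (hu j).of_le (by norm_cast; omega))
        (fun j => (hv j).of_le (by exact_mod_cast le_top))]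
    exact hvar _ hv hvs
  have hcont : ContinuousOn (fun t => eulerLagrangeOperator κ (u i) t - f i t) (Ioo α β) :=
    (continuous_eulerLagrangeOperator (hu i)).continuousOn.sub
      ((hf i).mono (Ioo_subset_Icc_self.trans Icc_subset_uIcc))
  exact sub_eq_zero.1 (eqOn_zero_of_forall_intervalIntegral_contDiff_smul_eq_zero hcont hweak ht)

end QuadraticEnergy

/-- If `u` is six times continuously differentiable and the first variation
of the holonomic energy `Ψ` vanishes for every smooth variation compactly supported in
`(0, L)`, then `−a (u^i)″ + b (u^i)⁽⁴⁾ − c (u^i)⁽⁶⁾ = (f̂₀)_i` on `(0, L)`. -/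
theorem statement7
    (L a b c : ℝ) (hL : 0 < L) (ha : 0 < a) (hb : 0 < b) (hc : 0 < c)
    (f₀ : ℝ → Fin 3 → ℝ) (hf₀ : ∀ i, Continuous (fun t => f₀ t i))
    (u : ℝ → Fin 3 → ℝ) (hu : ∀ i, ContDiff ℝ 6 (fun t => u t i))
    (hvar : ∀ δu : ℝ → Fin 3 → ℝ,
      (∀ i, ContDiff ℝ (⊤ : ℕ∞) (fun t => δu t i)) →
      (∀ i, tsupport (fun t => δu t i) ⊆ Ioo (0:ℝ) L) →
      deriv (fun s : ℝ => PsiHolo L a b c f₀ (fun t i => u t i + s * δu t i)) 0 = 0) :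
    ∀ t ∈ Ioo (0:ℝ) L, ∀ i : Fin 3,
      -a * iteratedDeriv 2 (fun s => u s i) t
        + b * iteratedDeriv 4 (fun s => u s i) t
        - c * iteratedDeriv 6 (fun s => u s i) t = f₀ t i := by
  simp only [PsiHolo_eq_quadraticEnergy] at hvar
  simpa only [eulerLagrangeOperator_holonomic] using
    statement7_general (fun i => (hf₀ i).continuousOn) hu fun v => hvar fun t i => v i t
end
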